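/- arXiv:2504.04117 — 2 statements merged into one kernel-verified Lean document; each statement's English description precedes it below -/
import Mathlib

section
/- Let X and Y be normed vector spaces and T : X → Y a nonzero bounded linear operator of finite rank l. Then the infimum, over all bases (w₁,...,w_l) of T(X) with dual basis (w₁*,...,w_l*) in T(X)*, of max_{1 ≤ j ≤ l} ‖Σ_{i=1}^{j} (wᵢ* ∘ T)(·) wᵢ‖ (operator norm in L(X,Y)) is attained: it is a minimum. -/
open Finset

/-!
A basis of `V = T(X)`, up to rescaling its vectors, is a family of `dim V` nonzero orthogonal
idempotents `P i` of `V →L V`. Such families form a closed set, because a nonzero idempotent has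
norm at least `1`. The quantity to minimize is `‖L P‖` for the linear map
`L P = (∑ i ≤ j, P i ∘ T)ⱼ` and the sup norm over `j`. As `L` is injective with finite-dimensional
domain, it is bounded below, so `P ↦ ‖L P‖` is coercive and attains its minimum on that closed set.
-/

open Function Module

section PartialSums

variable (R : Type*) {M ι : Type*} [Semiring R] [AddCommMonoid M] [Module R M]
  [PartialOrder ι] [LocallyFiniteOrderBot ι]

/-- The linear map sending a family `a` to the family of its partial sums `∑ i ≤ j, a i`. -/
def partialSums : (ι → M) →ₗ[R] (ι → M) :=
  LinearMap.pi fun j => ∑ i ∈ Iic j, LinearMap.proj i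

@[simp]
lemma partialSums_apply (a : ι → M) (j : ι) : partialSums R a j = ∑ i ∈ Iic j, a i := by
  simp [partialSums]

lemma partialSums_injective [IsCancelAdd M] [WellFoundedLT ι] :
    Injective (partialSums R : (ι → M) →ₗ[R] (ι → M)) := by
  classical
  intro a a' h
  funext j
  induction j using WellFoundedLT.induction with
  | ind j ih =>
    have hj : ∑ i ∈ Iic j, a i = ∑ i ∈ Iic j, a' i := by simpa using congrFun h j
    have hlt : ∑ i ∈ Iio j, a i = ∑ i ∈ Iio j, a' i :=
      sum_congr rfl fun i hi => ih i (mem_Iio.1 hi)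
    rw [← Iio_insert, sum_insert (by simp), sum_insert (by simp), hlt] at hj
    exact add_right_cancel hj

end PartialSums

section BasisProj

variable {R M ι : Type*} [CommSemiring R] [AddCommMonoid M] [Module R M]

/-- The rank-one projections `v ↦ bᵢ*(v) bᵢ` attached to a basis `b`. Rescaling the vectors of `b`
does not change them, which makes them better parameters for a compactness argument than `b`. -/
noncomputable def basisProj (b : Basis ι R M) (i : ι) : End R M :=
  (b.coord i).smulRight (b i)

lemma orthogonalIdempotents_basisProj (b : Basis ι R M) : OrthogonalIdempotents (basisProj b) where
  idem i := by ext v; simp [basisProj]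
  ortho i j hij := by ext v; simp [basisProj, hij]

lemma basisProj_ne_zero [Nontrivial R] (b : Basis ι R M) (i : ι) : basisProj b i ≠ 0 := fun h =>
  b.ne_zero i (by simpa [basisProj] using LinearMap.congr_fun h (b i))

variable {K V : Type*} [Field K] [AddCommGroup V] [Module K V] {e : ι → End K V}

lemma linearIndependent_of_orthogonalIdempotents (he : OrthogonalIdempotents e) {v : ι → V}
    (hv : ∀ i, e i (v i) ≠ 0) : LinearIndependent K fun i => e i (v i) := by
  classical
  refine linearIndependent_iff'.2 fun s c hc i hi => ?_
  have hproj (j : ι) : e i (c j • e j (v j)) = if i = j then c i • e i (v i) else 0 := by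
    rw [map_smul, ← End.mul_apply, he.mul_eq]
    split_ifs with h <;> simp [h]
  have hci : c i • e i (v i) = 0 := by
    simpa only [map_sum, hproj, sum_ite_eq, if_pos hi, map_zero] using congrArg (e i) hc
  exact (smul_eq_zero.1 hci).resolve_right (hv i)

lemma exists_basisProj_eq_iff [Fintype ι] [FiniteDimensional K V]
    (hι : Fintype.card ι = finrank K V) :
    (∃ b : Basis ι K V, basisProj b = e) ↔ OrthogonalIdempotents e ∧ ∀ i, e i ≠ 0 := by
  classical
  constructor
  · rintro ⟨b, rfl⟩
    exact ⟨orthogonalIdempotents_basisProj b, basisProj_ne_zero b⟩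
  · rintro ⟨he, hne⟩
    choose v hv using fun i => DFunLike.ne_iff.1 (hne i)
    have hli := linearIndependent_of_orthogonalIdempotents he hv
    let b := Basis.mk hli (hli.span_eq_top_of_card_eq_finrank' hι).ge
    have hb : ∀ i, b i = e i (v i) := Basis.mk_apply _ _
    refine ⟨b, funext fun i => b.ext fun j => ?_⟩
    have hij : e i (b j) = if i = j then b j else 0 := by
      rw [hb, ← End.mul_apply, he.mul_eq]
      split_ifs with h <;> simp [h]
    rw [hij]
    split_ifs with h <;> simp [basisProj, h]

end BasisProj

lemma one_le_norm_of_isIdempotentElem {A : Type*} [NonUnitalNormedRing A] {a : A}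
    (ha : IsIdempotentElem a) (hne : a ≠ 0) : 1 ≤ ‖a‖ := by
  have hsq : ‖a‖ * 1 ≤ ‖a‖ * ‖a‖ := by simpa [ha.eq] using norm_mul_le a a
  exact le_of_mul_le_mul_left hsq (norm_pos_iff.2 hne)

lemma isClosed_setOf_orthogonalIdempotents_ne_zero {A ι : Type*} [NormedRing A] :
    IsClosed {e : ι → A | OrthogonalIdempotents e ∧ ∀ i, e i ≠ 0} := by
  classical
  have hset : {e : ι → A | OrthogonalIdempotents e ∧ ∀ i, e i ≠ 0} =
      {e | (∀ i j, e i * e j = if i = j then e i else 0) ∧ ∀ i, 1 ≤ ‖e i‖} := by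
    ext e
    rw [Set.mem_ofPred_eq, Set.mem_ofPred_eq, OrthogonalIdempotents.iff_mul_eq]
    refine and_congr_right fun he => forall_congr' fun i => ⟨fun hne => ?_, fun h h0 => ?_⟩
    · exact one_le_norm_of_isIdempotentElem ((he i i).trans (if_pos rfl)) hne
    · norm_num [h0] at h
  simp only [hset, Set.ofPred_and, Set.ofPred_forall]
  refine .inter (isClosed_iInter fun i => isClosed_iInter fun j => isClosed_eq (by fun_prop) ?_)
    (isClosed_iInter fun i => isClosed_le continuous_const (by fun_prop))
  split_ifs <;> fun_prop

section Minimizers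

variable {𝕜 F : Type*} [NontriviallyNormedField 𝕜] [ProperSpace 𝕜]
  [NormedAddCommGroup F] [NormedSpace 𝕜 F]

lemma exists_isMinOn_norm_of_injective {E : Type*} [NormedAddCommGroup E] [NormedSpace 𝕜 E]
    [FiniteDimensional 𝕜 E] {L : E →ₗ[𝕜] F} (hL : Injective L) {s : Set E} (hs : IsClosed s)
    (hne : s.Nonempty) : ∃ x ∈ s, IsMinOn (fun x => ‖L x‖) s x := by
  have : ProperSpace E := FiniteDimensional.proper 𝕜 E
  obtain ⟨x₀, hx₀⟩ := hne
  obtain ⟨K, -, hK⟩ := L.injective_iff_antilipschitz.1 hL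
  have hcoercive : Filter.Tendsto (fun x => ‖L x‖) (Filter.cocompact E) Filter.atTop := by
    rw [← Metric.cobounded_eq_cocompact]
    exact tendsto_norm_cobounded_atTop.comp hK.tendsto_cobounded
  exact L.continuous_of_finiteDimensional.norm.continuousOn.exists_isMinOn' hs hx₀
    ((hcoercive.eventually_ge_atTop _).filter_mono inf_le_left)

theorem exists_basis_norm_map_basisProj_le {V ι : Type*} [NormedAddCommGroup V] [NormedSpace 𝕜 V]
    [FiniteDimensional 𝕜 V] [Fintype ι] (hι : Fintype.card ι = finrank 𝕜 V)
    {L : (ι → V →L[𝕜] V) →ₗ[𝕜] F} (hL : Injective L) :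
    ∃ b : Basis ι 𝕜 V, ∀ b' : Basis ι 𝕜 V,
      ‖L fun i => End.toContinuousLinearMap V (basisProj b i)‖ ≤
        ‖L fun i => End.toContinuousLinearMap V (basisProj b' i)‖ := by
  let Φ := End.toContinuousLinearMap (𝕜 := 𝕜) V
  let s := {e : ι → V →L[𝕜] V | OrthogonalIdempotents e ∧ ∀ i, e i ≠ 0}
  have mem_s_iff (e : ι → End 𝕜 V) : (fun i => Φ (e i)) ∈ s ↔ ∃ b, basisProj b = e := by
    rw [exists_basisProj_eq_iff hι]
    exact and_congr (OrthogonalIdempotents.map_injective_iff (f := Φ.toRingHom) Φ.injective)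
      (forall_congr' fun i => (map_ne_zero_iff Φ Φ.injective))
  have hne : s.Nonempty := ⟨_, (mem_s_iff _).2
    ⟨(finBasis 𝕜 V).reindex (Fintype.equivFinOfCardEq hι).symm, rfl⟩⟩
  obtain ⟨P, hP, hmin⟩ :=
    exists_isMinOn_norm_of_injective hL isClosed_setOf_orthogonalIdempotents_ne_zero hne
  obtain ⟨e, rfl⟩ : ∃ e : ι → End 𝕜 V, (fun i => Φ (e i)) = P :=
    ⟨fun i => Φ.symm (P i), funext fun i => Φ.apply_symm_apply (P i)⟩
  obtain ⟨b, rfl⟩ := (mem_s_iff e).1 hP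
  exact ⟨b, fun b' => hmin ((mem_s_iff _).2 ⟨b', rfl⟩)⟩

end Minimizers

lemma pi_norm_eq_iSup_norm {ι E : Type*} [Fintype ι] [SeminormedAddCommGroup E] (a : ι → E) :
    ‖a‖ = ⨆ i, ‖a i‖ :=
  le_antisymm
    ((pi_norm_le_iff_of_nonneg (Real.iSup_nonneg fun i => norm_nonneg (a i))).2
      (le_ciSup (Set.finite_range fun i => ‖a i‖).bddAbove))
    (Real.iSup_le (norm_le_pi_norm a) (norm_nonneg a))

section BasisExpansion

variable {𝕜 X Y ι : Type*} [NormedField 𝕜] [SeminormedAddCommGroup X] [NormedSpace 𝕜 X]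
  [SeminormedAddCommGroup Y] [NormedSpace 𝕜 Y] [Fintype ι] {T : X →L[𝕜] Y} {w : ι → Y}
  {φ : ι → X →L[𝕜] 𝕜}

variable (T w φ) in
/-- `IsBasisExpansion T w φ` says that `w` is a basis of the range of `T` and that `φ i = wᵢ* ∘ T`
for its dual basis `w*`. The latter is expressed without dual functionals on the range, through
the expansion of `T`, which determines the `φ i`. -/
def IsBasisExpansion : Prop :=
  LinearIndependent 𝕜 w ∧ (∀ i, w i ∈ LinearMap.range (T : X →ₗ[𝕜] Y)) ∧
    ∀ x, T x = ∑ i, φ i x • w i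

lemma isBasisExpansion_iff_exists_basis : IsBasisExpansion T w φ ↔
    ∃ b : Basis ι 𝕜 (LinearMap.range (T : X →ₗ[𝕜] Y)),
      (∀ i, b i = w i) ∧ ∀ i x, φ i x = b.coord i (T.rangeRestrict x) := by
  constructor
  · rintro ⟨hli, hmem, hT⟩
    let v (i : ι) : LinearMap.range (T : X →ₗ[𝕜] Y) := ⟨w i, hmem i⟩
    have hv : LinearIndependent 𝕜 v := .of_comp (Submodule.subtype _) hli
    have hTv (x : X) : T.rangeRestrict x = ∑ i, φ i x • v i := by
      ext
      simpa [v] using hT x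
    have hspan : ⊤ ≤ Submodule.span 𝕜 (Set.range v) := by
      rintro ⟨_, x, rfl⟩ -
      exact (Submodule.mem_span_range_iff_exists_fun 𝕜).2 ⟨fun i => φ i x, (hTv x).symm⟩
    let b := Basis.mk hv hspan
    have hb (i : ι) : b i = v i := Basis.mk_apply hv hspan i
    refine ⟨b, fun i => by rw [hb], fun i x => ?_⟩
    simp only [hTv, ← hb, Basis.coord_apply, Basis.repr_sum_self]
  · rintro ⟨b, hb, hφ⟩
    obtain rfl : (fun i => (b i : Y)) = w := funext hb
    refine ⟨b.linearIndependent.map' _ (Submodule.ker_subtype _), fun i => (b i).2, fun x => ?_⟩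
    calc T x = ↑(∑ i, b.repr (T.rangeRestrict x) i • b i) := by rw [b.sum_repr]; rfl
      _ = ∑ i, φ i x • (b i : Y) := by
        simp only [Submodule.coe_sum, Submodule.coe_smul, hφ, Basis.coord_apply]

end BasisExpansion

section PartialSumsCompRange

variable {𝕜 X Y ι : Type*} [NontriviallyNormedField 𝕜] [SeminormedAddCommGroup X]
  [NormedSpace 𝕜 X] [PartialOrder ι] [LocallyFiniteOrderBot ι]

variable (ι) in
/-- The linear map sending a family `P` of endomorphisms of the range of `T` to the partial sums of
`P i ∘ T`. The sup norm of its value at `basisProj b` is the quantity minimized by `𝔠(T)`. -/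
noncomputable def partialSumsCompRange [SeminormedAddCommGroup Y] [NormedSpace 𝕜 Y]
    (T : X →L[𝕜] Y) :
    (ι → LinearMap.range (T : X →ₗ[𝕜] Y) →L[𝕜] LinearMap.range (T : X →ₗ[𝕜] Y)) →ₗ[𝕜]
      (ι → X →L[𝕜] Y) :=
  partialSums 𝕜 ∘ₗ LinearMap.compLeft
    ((ContinuousLinearMap.postcomp X (Submodule.subtypeL _)).comp
      (ContinuousLinearMap.precomp _ T.rangeRestrict)).toLinearMap ι

lemma partialSumsCompRange_injective [SeminormedAddCommGroup Y] [NormedSpace 𝕜 Y]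
    [WellFoundedLT ι] (T : X →L[𝕜] Y) : Injective (partialSumsCompRange ι T) := by
  refine (partialSums_injective 𝕜).comp (g := partialSums 𝕜) fun P Q hPQ => funext fun i => ?_
  ext ⟨_, x, rfl⟩
  exact DFunLike.congr_fun (congrFun hPQ i) x

lemma norm_partialSumsCompRange_basisProj [CompleteSpace 𝕜] [NormedAddCommGroup Y]
    [NormedSpace 𝕜 Y] [Fintype ι] {T : X →L[𝕜] Y}
    [FiniteDimensional 𝕜 (LinearMap.range (T : X →ₗ[𝕜] Y))] {w : ι → Y} {φ : ι → X →L[𝕜] 𝕜}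
    {b : Basis ι 𝕜 (LinearMap.range (T : X →ₗ[𝕜] Y))}
    (hb : ∀ i, b i = w i) (hφ : ∀ i x, φ i x = b.coord i (T.rangeRestrict x)) :
    ‖partialSumsCompRange ι T fun i => End.toContinuousLinearMap _ (basisProj b i)‖ =
      ⨆ j, ‖∑ i ∈ Iic j, (φ i).smulRight (w i)‖ := by
  rw [pi_norm_eq_iSup_norm]
  refine iSup_congr fun j => congrArg norm ?_
  rw [partialSumsCompRange, LinearMap.comp_apply, partialSums_apply]
  refine sum_congr rfl fun i _ => ?_
  ext x
  rw [ContinuousLinearMap.smulRight_apply, hφ, ← hb]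
  rfl

end PartialSumsCompRange

theorem stmt15_general {𝕜 X Y ι : Type*} [NontriviallyNormedField 𝕜] [ProperSpace 𝕜]
    [NormedAddCommGroup X] [NormedSpace 𝕜 X] [NormedAddCommGroup Y] [NormedSpace 𝕜 Y]
    [Fintype ι] [PartialOrder ι] [LocallyFiniteOrderBot ι] (T : X →L[𝕜] Y)
    [FiniteDimensional 𝕜 (LinearMap.range (T : X →ₗ[𝕜] Y))]
    (hι : Fintype.card ι = finrank 𝕜 (LinearMap.range (T : X →ₗ[𝕜] Y))) :
    ∃ (w : ι → Y) (φ : ι → X →L[𝕜] 𝕜), IsBasisExpansion T w φ ∧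
      ∀ (w' : ι → Y) (φ' : ι → X →L[𝕜] 𝕜), IsBasisExpansion T w' φ' →
        (⨆ j, ‖∑ i ∈ Iic j, (φ i).smulRight (w i)‖) ≤
          ⨆ j, ‖∑ i ∈ Iic j, (φ' i).smulRight (w' i)‖ := by
  obtain ⟨b, hb⟩ := exists_basis_norm_map_basisProj_le hι (partialSumsCompRange_injective T)
  let φ (i : ι) : X →L[𝕜] 𝕜 := (b.coord i).toContinuousLinearMap ∘L T.rangeRestrict
  refine ⟨fun i => b i, φ, isBasisExpansion_iff_exists_basis.2
    ⟨b, fun _ => rfl, fun _ _ => rfl⟩, fun w' φ' h' => ?_⟩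
  obtain ⟨b', hw', hφ'⟩ := isBasisExpansion_iff_exists_basis.1 h'
  rw [← norm_partialSumsCompRange_basisProj (φ := φ) (fun _ => rfl) (fun _ _ => rfl),
    ← norm_partialSumsCompRange_basisProj hw' hφ']
  exact hb b'

/-- The infimum defining the constant `𝔠(T)` in Definition of cylindrical constant is
attained: among all bases of `T(X)` (with their dual functionals), some basis minimises
the maximal norm of partial sums `∑_{i ≤ j} (wᵢ* ∘ T)(·) wᵢ`. -/
theorem stmt15 {X Y : Type*} [NormedAddCommGroup X] [NormedSpace ℝ X]
    [NormedAddCommGroup Y] [NormedSpace ℝ Y]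
    (T : X →L[ℝ] Y) (hT : T ≠ 0) (l : ℕ) (hl : 0 < l)
    (hrank : Module.finrank ℝ (LinearMap.range (T : X →ₗ[ℝ] Y)) = l) :
    ∃ (w : Fin l → Y) (φ : Fin l → (X →L[ℝ] ℝ)),
      (LinearIndependent ℝ w ∧ (∀ i, w i ∈ LinearMap.range (T : X →ₗ[ℝ] Y)) ∧
        ∀ x : X, T x = ∑ i, φ i x • w i) ∧
      ∀ (w' : Fin l → Y) (φ' : Fin l → (X →L[ℝ] ℝ)),
        (LinearIndependent ℝ w' ∧ (∀ i, w' i ∈ LinearMap.range (T : X →ₗ[ℝ] Y)) ∧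
          ∀ x : X, T x = ∑ i, φ' i x • w' i) →
        (⨆ j : Fin l, ‖∑ i ∈ Finset.Iic j, (φ i).smulRight (w i)‖)
          ≤ ⨆ j : Fin l, ‖∑ i ∈ Finset.Iic j, (φ' i).smulRight (w' i)‖ := by
  have : FiniteDimensional ℝ (LinearMap.range (T : X →ₗ[ℝ] Y)) :=
    finite_of_finrank_pos (hrank ▸ hl)
  exact stmt15_general T (by rw [Fintype.card_fin, hrank])
end

section
/- Let X be a normed space, G ⊆ X, P ∈ X* a nonzero norm-attaining functional with P(v_P) = ‖P‖ for some unit vector v_P, and α ∈ (0,1). Suppose ξ(G,P,α) := sup{ H¹(G ∩ γ(ℝ)) : γ : ℝ → X Lipschitz, P(γ'(t)) ≥ α‖γ'(t)‖·‖P‖ whenever γ'(t) exists } is finite. Then there exists a function g : X → ℝ such that (i) 0 ≤ g(x) ≤ ‖P‖·ξ(G,P,α) for all x; (ii) |g(x+y) − g(x)| ≤ (α‖P‖/(1−α))·‖y‖ for all x ∈ X and y ∈ ker P; (iii) for every x,w ∈ X there is λ ∈ [0,1] with |g(x+w) − g(x) − λP(w)| ≤ (2α‖P‖/(1−α))·‖w‖,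 and λ = 1 whenever the segment [x, x + (P(w)/‖P‖)v_P] is contained in G; and (iv) g is (1 + 2α/(1−α))‖P‖-Lipschitz. -/
open MeasureTheory Set

/-!
Call `w` steep if `α * ‖w‖ * ‖P‖ ≤ P w`. Let `f x` be the largest length of parameters that a steep
curve, parametrized by the value of `P`, spends in `G` before reaching `x`. Prolonging a curve by a
steep segment shows that `f` increases in steep directions, and by at least the increment of `P`
along steep segments contained in `G`; the projection `P` turns `H¹` on such curves into Lebesgue
measure, so `0 ≤ f ≤ ‖P‖ * ξ`. But `f` may increase too fast, so it is replaced by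
`g x = sup_{s ≥ 0} (f (x + s • v) - s * ‖P‖)`, which keeps these properties and grows at rate at
most `‖P‖` along `v`. For `y` in the kernel of `P`, the vector `y + s • v` is steep as soon as
`s = α / (1 - α) * ‖y‖`, hence `g x ≤ g (x + y + s • v) ≤ g (x + y) + s * ‖P‖`. This is (ii), and
(iii) follows by moving first along `v` and then along the kernel.
-/

open scoped NNReal ENNReal

section SlopeEnvelope

variable {X : Type*} [AddCommMonoid X] [Module ℝ≥0 X] {f : X → ℝ} {v : X} {c : ℝ}

/-- The function `x ↦ sup_{s ≥ 0} (f (x + s • v) - s * c)`, a regularization of `f` whose growth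
rate in the direction `v` is at most `c`. It has the junk value `0` where the supremum is
infinite. -/
noncomputable def slopeEnvelope (f : X → ℝ) (v : X) (c : ℝ) (x : X) : ℝ :=
  ⨆ s : ℝ≥0, (f (x + s • v) - s * c)

lemma bddAbove_range_sub_mul (hf : BddAbove (range f)) (hc : 0 ≤ c) (x : X) :
    BddAbove (range fun s : ℝ≥0 ↦ f (x + s • v) - s * c) := by
  obtain ⟨M, hM⟩ := hf
  refine ⟨M, forall_mem_range.2 fun s ↦ ?_⟩
  exact (sub_le_self _ (by positivity)).trans (hM (mem_range_self _))

lemma sub_mul_le_slopeEnvelope (hf : BddAbove (range f)) (hc : 0 ≤ c) (x : X) (s : ℝ≥0) :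
    f (x + s • v) - s * c ≤ slopeEnvelope f v c x :=
  le_ciSup (bddAbove_range_sub_mul hf hc x) s

lemma le_slopeEnvelope (hf : BddAbove (range f)) (hc : 0 ≤ c) (x : X) :
    f x ≤ slopeEnvelope f v c x := by
  simpa using sub_mul_le_slopeEnvelope (v := v) hf hc x 0

lemma slopeEnvelope_le {M : ℝ} (hM : ∀ x, f x ≤ M) (hc : 0 ≤ c) (x : X) :
    slopeEnvelope f v c x ≤ M :=
  ciSup_le fun s ↦ (sub_le_self _ (by positivity)).trans (hM (x + s • v))

lemma slopeEnvelope_le_slopeEnvelope_add (hf : BddAbove (range f)) (hc : 0 ≤ c) {u : X}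
    (hu : ∀ x, f x ≤ f (x + u)) (x : X) :
    slopeEnvelope f v c x ≤ slopeEnvelope f v c (x + u) := by
  refine ciSup_mono (bddAbove_range_sub_mul hf hc (x + u)) fun s ↦ ?_
  simpa only [add_right_comm, sub_le_sub_iff_right] using hu (x + s • v)

lemma slopeEnvelope_add_smul_le (hf : BddAbove (range f)) (hc : 0 ≤ c) (x : X) (s : ℝ≥0) :
    slopeEnvelope f v c (x + s • v) ≤ slopeEnvelope f v c x + s * c := by
  refine ciSup_le fun r ↦ ?_
  have hle := sub_mul_le_slopeEnvelope (v := v) hf hc x (s + r)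
  rw [add_smul, ← add_assoc, NNReal.coe_add, add_mul] at hle
  linarith

lemma slopeEnvelope_add_mul_le (hf : BddAbove (range f)) (hc : 0 ≤ c) {x : X} {s : ℝ≥0}
    (h : ∀ r t : ℝ≥0, r + t = s → f (x + r • v) + t * c ≤ f (x + s • v)) :
    slopeEnvelope f v c x + s * c ≤ slopeEnvelope f v c (x + s • v) := by
  refine le_sub_iff_add_le.1 (ciSup_le fun r ↦ ?_)
  rcases le_total r s with hrs | hsr
  · obtain ⟨t, rfl⟩ := exists_add_of_le hrs
    have hle := (h r t rfl).trans (le_slopeEnvelope (v := v) hf hc _)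
    rw [NNReal.coe_add]
    linarith
  · obtain ⟨t, rfl⟩ := exists_add_of_le hsr
    have hle := sub_mul_le_slopeEnvelope (v := v) hf hc (x + s • v) t
    rw [add_smul, ← add_assoc, NNReal.coe_add]
    linarith

end SlopeEnvelope

lemma exists_mem_Icc_eq_mul_of_mem_uIcc {d q : ℝ} (h : d ∈ uIcc 0 q) :
    ∃ l ∈ Icc (0 : ℝ) 1, d = l * q ∧ (d = q → l = 1) := by
  by_cases hdq : d = q
  · exact ⟨1, by simp, by simpa using hdq, fun _ ↦ rfl⟩
  · rw [← segment_eq_uIcc, segment_eq_image'] at h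
    obtain ⟨l, hl, rfl⟩ := h
    exact ⟨l, hl, by simp, fun h ↦ absurd h hdq⟩

section Seminormed

variable {X : Type*} [SeminormedAddCommGroup X] [NormedSpace ℝ X]
  {P : X →L[ℝ] ℝ} {α : ℝ} {v w x y : X} {γ η : ℝ → X}

/-- The vectors of the cone `C(P, α)` of directions making a small angle with the functional `P`;
the curves in the definition of `ξ(G, P, α)` have their derivatives in this cone. -/
def IsSteep (P : X →L[ℝ] ℝ) (α : ℝ) (w : X) : Prop :=
  α * ‖w‖ * ‖P‖ ≤ P w

lemma IsSteep.add (hα : 0 ≤ α) (hy : IsSteep P α y) (hw : IsSteep P α w) :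
    IsSteep P α (y + w) :=
  calc α * ‖y + w‖ * ‖P‖ ≤ α * (‖y‖ + ‖w‖) * ‖P‖ := by gcongr; exact norm_add_le y w
    _ = α * ‖y‖ * ‖P‖ + α * ‖w‖ * ‖P‖ := by ring
    _ ≤ P (y + w) := by rw [map_add]; exact add_le_add hy hw

lemma IsSteep.smul (hw : IsSteep P α w) {r : ℝ} (hr : 0 ≤ r) : IsSteep P α (r • w) :=
  calc α * ‖r • w‖ * ‖P‖ = r * (α * ‖w‖ * ‖P‖) := by rw [norm_smul_of_nonneg hr]; ring
    _ ≤ P (r • w) := by rw [map_smul, smul_eq_mul]; exact mul_le_mul_of_nonneg_left hw hr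

lemma IsSteep.apply_nonneg (hα : 0 ≤ α) (hw : IsSteep P α w) : 0 ≤ P w :=
  le_trans (by positivity) hw

lemma isClosed_setOf_isSteep : IsClosed {w | IsSteep P α w} :=
  isClosed_le (by fun_prop) (by fun_prop)

lemma isSteep_of_apply_eq_norm (hα : α ≤ 1) (hv : ‖v‖ = 1) (hPv : P v = ‖P‖) : IsSteep P α v := by
  rw [IsSteep, hv, hPv, mul_one]
  exact mul_le_of_le_one_left (norm_nonneg P) hα

lemma isSteep_add_smul_of_apply_eq_zero (hα : α ∈ Ico 0 1) (hv : ‖v‖ = 1) (hPv : P v = ‖P‖)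
    (hy : P y = 0) : IsSteep P α (y + (α / (1 - α) * ‖y‖) • v) := by
  have hα' : 0 < 1 - α := sub_pos.2 hα.2
  have hα0 : 0 ≤ α := hα.1
  set s := α / (1 - α) * ‖y‖ with hs
  have hs0 : 0 ≤ s := by positivity
  have hnorm : ‖y + s • v‖ ≤ ‖y‖ + s := by
    simpa only [norm_smul_of_nonneg hs0, hv, mul_one] using norm_add_le y (s • v)
  -- `s` is the solution of `α * (‖y‖ + s) = s`.
  have hfix : α * (‖y‖ + s) = s := by rw [hs]; field_simp; ring
  calc α * ‖y + s • v‖ * ‖P‖ ≤ α * (‖y‖ + s) * ‖P‖ := by gcongr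
    _ = P (y + s • v) := by rw [hfix, map_add, hy, zero_add, map_smul, hPv, smul_eq_mul]

/-- The growth conditions from which the estimates (ii)-(iv) are deduced: `g` increases in steep
directions, and its growth rate in the direction `v` is at most `‖P‖`. -/
structure HasSteepGrowth (P : X →L[ℝ] ℝ) (α : ℝ) (v : X) (g : X → ℝ) : Prop where
  le_add_of_isSteep : ∀ x w, IsSteep P α w → g x ≤ g (x + w)
  add_smul_le : ∀ x (s : ℝ), 0 ≤ s → g (x + s • v) ≤ g x + s * ‖P‖

namespace HasSteepGrowth

variable {g : X → ℝ}

lemma le_add_of_apply_eq_zero (hg : HasSteepGrowth P α v g) (hα : α ∈ Ico 0 1) (hv : ‖v‖ = 1)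
    (hPv : P v = ‖P‖) (x : X) (hy : P y = 0) :
    g x ≤ g (x + y) + α * ‖P‖ / (1 - α) * ‖y‖ := by
  have hα' : 0 < 1 - α := sub_pos.2 hα.2
  have hα0 : 0 ≤ α := hα.1
  set s := α / (1 - α) * ‖y‖ with hs
  calc g x ≤ g (x + (y + s • v)) :=
        hg.le_add_of_isSteep x _ (isSteep_add_smul_of_apply_eq_zero hα hv hPv hy)
    _ = g (x + y + s • v) := by rw [add_assoc]
    _ ≤ g (x + y) + s * ‖P‖ := hg.add_smul_le _ s (by positivity)
    _ = g (x + y) + α * ‖P‖ / (1 - α) * ‖y‖ := by rw [hs]; ring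

lemma abs_sub_le_of_apply_eq_zero (hg : HasSteepGrowth P α v g) (hα : α ∈ Ico 0 1) (hv : ‖v‖ = 1)
    (hPv : P v = ‖P‖) (x : X) (hy : P y = 0) :
    |g (x + y) - g x| ≤ α * ‖P‖ / (1 - α) * ‖y‖ := by
  have hle := hg.le_add_of_apply_eq_zero hα hv hPv x hy
  have hge := hg.le_add_of_apply_eq_zero hα hv hPv (x + y) (y := -y) (by rw [map_neg, hy, neg_zero])
  rw [add_neg_cancel_right, norm_neg] at hge
  exact abs_sub_le_iff.2 ⟨sub_le_iff_le_add'.2 hge, sub_le_iff_le_add'.2 hle⟩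

lemma sub_mem_uIcc (hg : HasSteepGrowth P α v g) (hv : IsSteep P α v) (x : X) (s : ℝ) :
    g (x + s • v) - g x ∈ uIcc 0 (s * ‖P‖) := by
  have hmem : ∀ (x : X) (s : ℝ), 0 ≤ s → g (x + s • v) - g x ∈ Icc 0 (s * ‖P‖) := fun x s hs ↦
    ⟨sub_nonneg.2 (hg.le_add_of_isSteep x _ (hv.smul hs)),
      sub_le_iff_le_add'.2 (hg.add_smul_le x s hs)⟩
  rcases le_total 0 s with hs | hs
  · exact Icc_subset_uIcc (hmem x s hs)
  · obtain ⟨h0, h1⟩ := hmem (x + s • v) (-s) (neg_nonneg.2 hs)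
    rw [neg_smul, add_neg_cancel_right] at h0 h1
    exact mem_uIcc.2 (.inr ⟨by linarith, by linarith⟩)

lemma exists_abs_sub_le (hg : HasSteepGrowth P α v g) (hα : α ∈ Ico 0 1) (hv : ‖v‖ = 1)
    (hPv : P v = ‖P‖) (x w : X) :
    ∃ l ∈ Icc (0 : ℝ) 1,
      |g (x + w) - (g x + l * P w)| ≤ 2 * α * ‖P‖ / (1 - α) * ‖w‖ ∧
      (g (x + (P w / ‖P‖) • v) = g x + P w → l = 1) := by
  have hα' : 0 < 1 - α := sub_pos.2 hα.2
  have hα0 : 0 ≤ α := hα.1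
  have hPw : |P w| ≤ ‖P‖ * ‖w‖ := P.le_opNorm w
  set s := P w / ‖P‖ with hs
  have hsP : s * ‖P‖ = P w :=
    div_mul_cancel_of_imp fun hP0 ↦ by simpa only [hP0, zero_mul, abs_nonpos_iff] using hPw
  have hsw : |s| ≤ ‖w‖ := by
    rw [hs, abs_div, abs_norm]
    exact div_le_of_le_mul₀ (norm_nonneg P) (norm_nonneg w) (by rwa [mul_comm])
  have hnorm : ‖w - s • v‖ ≤ 2 * ‖w‖ :=
    calc ‖w - s • v‖ ≤ ‖w‖ + |s| := by
          simpa only [norm_smul, hv, mul_one, Real.norm_eq_abs] using norm_sub_le w (s • v)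
      _ ≤ 2 * ‖w‖ := by linarith
  have hker : P (w - s • v) = 0 := by rw [map_sub, map_smul, hPv, smul_eq_mul, hsP, sub_self]
  obtain ⟨l, hl, hgl, hl1⟩ := exists_mem_Icc_eq_mul_of_mem_uIcc
    (hg.sub_mem_uIcc (isSteep_of_apply_eq_norm hα.2.le hv hPv) x s)
  rw [hsP] at hgl hl1
  refine ⟨l, hl, ?_, fun h ↦ hl1 (sub_eq_iff_eq_add'.2 h)⟩
  calc |g (x + w) - (g x + l * P w)|
      = |g (x + s • v + (w - s • v)) - g (x + s • v)| := by
        rw [← hgl, add_sub_cancel, add_assoc, add_sub_cancel]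
    _ ≤ α * ‖P‖ / (1 - α) * ‖w - s • v‖ := hg.abs_sub_le_of_apply_eq_zero hα hv hPv _ hker
    _ ≤ α * ‖P‖ / (1 - α) * (2 * ‖w‖) := by gcongr
    _ = 2 * α * ‖P‖ / (1 - α) * ‖w‖ := by ring

lemma lipschitzWith (hg : HasSteepGrowth P α v g) (hα : α ∈ Ico 0 1) (hv : ‖v‖ = 1)
    (hPv : P v = ‖P‖) :
    LipschitzWith (Real.toNNReal ((1 + 2 * α / (1 - α)) * ‖P‖)) g := by
  refine LipschitzWith.of_dist_le' fun a b ↦ ?_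
  obtain ⟨l, hl, hgl, -⟩ := hg.exists_abs_sub_le hα hv hPv b (a - b)
  rw [add_sub_cancel] at hgl
  have hlP : |l * P (a - b)| ≤ ‖P‖ * ‖a - b‖ := by
    rw [abs_mul, abs_of_nonneg hl.1]
    exact (mul_le_of_le_one_left (abs_nonneg _) hl.2).trans (P.le_opNorm _)
  rw [Real.dist_eq, dist_eq_norm]
  calc |g a - g b| = |(g a - (g b + l * P (a - b))) + l * P (a - b)| := by congr 1; ring
    _ ≤ |g a - (g b + l * P (a - b))| + |l * P (a - b)| := abs_add_le _ _
    _ ≤ 2 * α * ‖P‖ / (1 - α) * ‖a - b‖ + ‖P‖ * ‖a - b‖ := add_le_add hgl hlP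
    _ = (1 + 2 * α / (1 - α)) * ‖P‖ * ‖a - b‖ := by ring

end HasSteepGrowth

/-- A section of `P` with steep increments, that is, a steep curve parametrized by the value of
`P`. -/
structure IsSteepSection (P : X →L[ℝ] ℝ) (α : ℝ) (γ : ℝ → X) : Prop where
  rightInverse : Function.RightInverse γ P
  isSteep_sub : ∀ s t, s ≤ t → IsSteep P α (γ t - γ s)

lemma isSteepSection_line (hw : IsSteep P α w) (hPw : 0 < P w) (x : X) :
    IsSteepSection P α fun t ↦ x + ((t - P x) / P w) • w where
  rightInverse t := by
    rw [map_add, map_smul, smul_eq_mul, div_mul_cancel₀ _ hPw.ne', add_sub_cancel]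
  isSteep_sub s t hst := by
    rw [add_sub_add_left_eq_sub, ← sub_smul, ← sub_div, sub_sub_sub_cancel_right]
    exact hw.smul (div_nonneg (sub_nonneg.2 hst) hPw.le)

namespace IsSteepSection

lemma piecewise_Iic (hα : 0 ≤ α) (hγ : IsSteepSection P α γ) (hη : IsSteepSection P α η) {a : ℝ}
    (ha : γ a = η a) : IsSteepSection P α ((Iic a).piecewise γ η) where
  rightInverse t := by
    by_cases ht : t ∈ Iic a
    · rw [piecewise_eq_of_mem _ _ _ ht, hγ.rightInverse]
    · rw [piecewise_eq_of_notMem _ _ _ ht, hη.rightInverse]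
  isSteep_sub s t hst := by
    by_cases hs : s ∈ Iic a <;> by_cases ht : t ∈ Iic a
    · simpa only [piecewise_eq_of_mem, hs, ht] using hγ.isSteep_sub s t hst
    · rw [piecewise_eq_of_mem _ _ _ hs, piecewise_eq_of_notMem _ _ _ ht,
        ← sub_add_sub_cancel _ (η a), ← ha]
      exact .add hα (ha ▸ hη.isSteep_sub a t (not_le.1 ht).le) (hγ.isSteep_sub s a hs)
    · exact absurd (hst.trans ht) hs
    · rw [piecewise_eq_of_notMem _ _ _ hs, piecewise_eq_of_notMem _ _ _ ht]
      exact hη.isSteep_sub s t hst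

lemma exists_extension (hα : 0 ≤ α) (hγ : IsSteepSection P α γ) (hx : γ (P x) = x)
    (hw : IsSteep P α w) (hPw : 0 < P w) :
    ∃ η, IsSteepSection P α η ∧ η (P (x + w)) = x + w ∧ EqOn η γ (Iic (P x)) ∧
      MapsTo η (Ioc (P x) (P (x + w))) (segment ℝ x (x + w)) := by
  have hlt : P x < P (x + w) := by rwa [map_add, lt_add_iff_pos_right]
  refine ⟨_, hγ.piecewise_Iic hα (isSteepSection_line hw hPw x) (a := P x) (by simpa using hx),
    ?_, piecewise_eqOn _ _ _, fun t ht ↦ ?_⟩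
  · rw [piecewise_eq_of_notMem _ _ _ (notMem_Iic.2 hlt), map_add, add_sub_cancel_left,
      div_self hPw.ne', one_smul]
  · have htw : t - P x ≤ P w := by rw [sub_le_iff_le_add', ← map_add]; exact ht.2
    rw [piecewise_eq_of_notMem _ _ _ (notMem_Iic.2 ht.1), segment_eq_image']
    exact ⟨(t - P x) / P w, ⟨div_nonneg (sub_nonneg.2 ht.1.le) hPw.le, (div_le_one hPw).2 htw⟩,
      by rw [add_sub_cancel_left]⟩

lemma norm_pos (hγ : IsSteepSection P α γ) : 0 < ‖P‖ :=
  pos_of_mul_pos_left (b := ‖γ 1‖) (zero_lt_one.trans_le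
    (by simpa only [hγ.rightInverse 1, norm_one] using P.le_opNorm (γ 1))) (norm_nonneg _)

lemma lipschitzWith (hγ : IsSteepSection P α γ) (hα : 0 < α) :
    LipschitzWith (Real.toNNReal (1 / (α * ‖P‖))) γ := by
  have hP0 : 0 < ‖P‖ := hγ.norm_pos
  refine LipschitzWith.of_dist_le' fun s t ↦ ?_
  wlog hst : t ≤ s generalizing s t
  · simpa only [dist_comm] using this t s (le_of_not_ge hst)
  have hsteep : α * ‖γ s - γ t‖ * ‖P‖ ≤ s - t := by
    have hle := hγ.isSteep_sub t s hst
    rwa [IsSteep, map_sub, hγ.rightInverse, hγ.rightInverse] at hle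
  rw [dist_eq_norm, Real.dist_eq, abs_of_nonneg (sub_nonneg.2 hst), one_div_mul_eq_div,
    le_div_iff₀ (by positivity)]
  linarith

end IsSteepSection

end Seminormed

section Normed

variable {X : Type*} [NormedAddCommGroup X] [NormedSpace ℝ X]
  {G : Set X} {P : X →L[ℝ] ℝ} {α : ℝ} {v w x : X} {γ : ℝ → X}

lemma IsSteep.apply_pos (hα : 0 < α) (hP : 0 < ‖P‖) (hw : IsSteep P α w) (hw0 : w ≠ 0) :
    0 < P w :=
  lt_of_lt_of_le (by positivity) hw

lemma IsSteepSection.isSteep_of_hasDerivAt (hγ : IsSteepSection P α γ) {t : ℝ}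
    (h : HasDerivAt γ w t) : IsSteep P α w := by
  refine isClosed_setOf_isSteep.mem_of_tendsto
    (h.tendsto_slope.mono_left (nhdsGT_le_nhdsNE t)) ?_
  filter_upwards [self_mem_nhdsWithin] with s (hs : t < s)
  exact (hγ.isSteep_sub t s hs.le).smul (inv_nonneg.2 (sub_nonneg.2 hs.le))

/-- The largest measure of the set of parameters at which a steep section of `P` ending at `x` is
in `G`. -/
noncomputable def steepGain (G : Set X) (P : X →L[ℝ] ℝ) (α : ℝ) (x : X) : ℝ≥0∞ :=
  ⨆ γ : {γ : ℝ → X // IsSteepSection P α γ ∧ γ (P x) = x}, volume (γ.1 ⁻¹' G ∩ Iic (P x))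

lemma le_steepGain (hγ : IsSteepSection P α γ) (hx : γ (P x) = x) :
    volume (γ ⁻¹' G ∩ Iic (P x)) ≤ steepGain G P α x :=
  le_iSup (fun γ : {γ : ℝ → X // IsSteepSection P α γ ∧ γ (P x) = x} ↦
    volume (γ.1 ⁻¹' G ∩ Iic (P x))) ⟨γ, hγ, hx⟩

lemma steepGain_le_steepGain_add (hα : 0 < α) (hw : IsSteep P α w) :
    steepGain G P α x ≤ steepGain G P α (x + w) := by
  rcases eq_or_ne w 0 with rfl | hw0
  · rw [add_zero]
  refine iSup_le fun ⟨γ, hγ, hx⟩ ↦ ?_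
  have hPw := hw.apply_pos hα hγ.norm_pos hw0
  obtain ⟨η, hη, hηx, hηγ, -⟩ := hγ.exists_extension hα.le hx hw hPw
  calc volume (γ ⁻¹' G ∩ Iic (P x)) = volume (η ⁻¹' G ∩ Iic (P x)) := by
        rw [inter_comm, ← hηγ.inter_preimage_eq, inter_comm]
    _ ≤ volume (η ⁻¹' G ∩ Iic (P (x + w))) := by
        gcongr
        rw [map_add]
        exact le_add_of_nonneg_right hPw.le
    _ ≤ steepGain G P α (x + w) := le_steepGain hη hηx

lemma steepGain_add_ofReal_le (hα : 0 < α) (hw : IsSteep P α w)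
    (hG : segment ℝ x (x + w) ⊆ G) :
    steepGain G P α x + ENNReal.ofReal (P w) ≤ steepGain G P α (x + w) := by
  rcases (hw.apply_nonneg hα.le).eq_or_lt with hPw | hPw
  · rw [← hPw, ENNReal.ofReal_zero, add_zero]
    exact steepGain_le_steepGain_add hα hw
  have : Nonempty {γ : ℝ → X // IsSteepSection P α γ ∧ γ (P x) = x} :=
    ⟨⟨_, isSteepSection_line hw hPw x, by simp⟩⟩
  rw [steepGain, ENNReal.iSup_add]
  refine iSup_le fun ⟨γ, hγ, hx⟩ ↦ ?_
  obtain ⟨η, hη, hηx, hηγ, hηG⟩ := hγ.exists_extension hα.le hx hw hPw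
  have hle : P x ≤ P (x + w) := by rw [map_add]; exact le_add_of_nonneg_right hPw.le
  have hdisj : Disjoint (η ⁻¹' G ∩ Iic (P x)) (Ioc (P x) (P (x + w))) :=
    (Iic_disjoint_Ioc le_rfl).mono_left inter_subset_right
  calc volume (γ ⁻¹' G ∩ Iic (P x)) + ENNReal.ofReal (P w)
      = volume (η ⁻¹' G ∩ Iic (P x)) + volume (Ioc (P x) (P (x + w))) := by
        rw [inter_comm, ← hηγ.inter_preimage_eq, inter_comm, Real.volume_Ioc, map_add,
          add_sub_cancel_left]
    _ = volume (η ⁻¹' G ∩ Iic (P x) ∪ Ioc (P x) (P (x + w))) :=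
        (measure_union hdisj measurableSet_Ioc).symm
    _ ≤ volume (η ⁻¹' G ∩ Iic (P (x + w))) := by
        exact measure_mono (union_subset (by gcongr) fun t ht ↦ ⟨hG (hηG ht), ht.2⟩)
    _ ≤ steepGain G P α (x + w) := le_steepGain hη hηx

/-- The function `g` of the theorem: `steepGain`, with its growth rate along `v` reduced to `‖P‖`.
It is meaningful when `steepGain` is bounded. -/
noncomputable def steepPotential (G : Set X) (P : X →L[ℝ] ℝ) (α : ℝ) (v : X) : X → ℝ :=
  slopeEnvelope (fun x ↦ (steepGain G P α x).toReal) v ‖P‖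

section SteepPotential

variable {M : ℝ≥0}

lemma toReal_steepGain_le (hM : ∀ x, steepGain G P α x ≤ M) (x : X) :
    (steepGain G P α x).toReal ≤ M :=
  ENNReal.toReal_mono ENNReal.coe_ne_top (hM x)

lemma bddAbove_range_toReal_steepGain (hM : ∀ x, steepGain G P α x ≤ M) :
    BddAbove (range fun x ↦ (steepGain G P α x).toReal) :=
  ⟨M, forall_mem_range.2 (toReal_steepGain_le hM)⟩

lemma steepPotential_nonneg (hM : ∀ x, steepGain G P α x ≤ M) (x : X) :
    0 ≤ steepPotential G P α v x :=
  ENNReal.toReal_nonneg.trans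
    (le_slopeEnvelope (bddAbove_range_toReal_steepGain hM) (norm_nonneg P) x)

lemma steepPotential_le (hM : ∀ x, steepGain G P α x ≤ M) (x : X) :
    steepPotential G P α v x ≤ M :=
  slopeEnvelope_le (toReal_steepGain_le hM) (norm_nonneg P) x

lemma hasSteepGrowth_steepPotential (hM : ∀ x, steepGain G P α x ≤ M) (hα : 0 < α) :
    HasSteepGrowth P α v (steepPotential G P α v) where
  le_add_of_isSteep x _ hw :=
    slopeEnvelope_le_slopeEnvelope_add (bddAbove_range_toReal_steepGain hM) (norm_nonneg P)
      (fun _ ↦ ENNReal.toReal_mono (ne_top_of_le_ne_top ENNReal.coe_ne_top (hM _))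
        (steepGain_le_steepGain_add hα hw)) x
  add_smul_le x s hs :=
    slopeEnvelope_add_smul_le (bddAbove_range_toReal_steepGain hM) (norm_nonneg P) x ⟨s, hs⟩

lemma toReal_steepGain_add_le (hM : ∀ x, steepGain G P α x ≤ M) (hα : 0 < α)
    (hw : IsSteep P α w) (hG : segment ℝ x (x + w) ⊆ G) :
    (steepGain G P α x).toReal + P w ≤ (steepGain G P α (x + w)).toReal := by
  have hfin : ∀ x, steepGain G P α x ≠ ∞ := fun x ↦ ne_top_of_le_ne_top ENNReal.coe_ne_top (hM x)
  have hle := ENNReal.toReal_mono (hfin _) (steepGain_add_ofReal_le hα hw hG)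
  rwa [ENNReal.toReal_add (hfin x) ENNReal.ofReal_ne_top,
    ENNReal.toReal_ofReal (hw.apply_nonneg hα.le)] at hle

lemma steepPotential_add_mul_le (hM : ∀ x, steepGain G P α x ≤ M) (hα : 0 < α)
    (hv : IsSteep P α v) (hPv : P v = ‖P‖) {s : ℝ≥0}
    (hG : segment ℝ x (x + s • v) ⊆ G) :
    steepPotential G P α v x + s * ‖P‖ ≤ steepPotential G P α v (x + s • v) := by
  refine slopeEnvelope_add_mul_le (bddAbove_range_toReal_steepGain hM) (norm_nonneg P) ?_
  rintro r t rfl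
  have hPt : P (t • v) = t * ‖P‖ := by rw [NNReal.smul_def, map_smul, hPv, smul_eq_mul]
  rw [add_smul, ← add_assoc] at hG ⊢
  rw [← hPt]
  have hmem : x + r • v ∈ segment ℝ x (x + r • v + t • v) := by
    rw [mem_segment_iff_sameRay, add_sub_cancel_left, add_sub_cancel_left]
    exact (SameRay.refl v).nonneg_smul_left r.2 |>.nonneg_smul_right t.2
  exact toReal_steepGain_add_le hM hα (hv.smul t.2)
    (((convex_segment _ _).segment_subset hmem (right_mem_segment ℝ _ _)).trans hG)

lemma steepPotential_add_smul_eq (hM : ∀ x, steepGain G P α x ≤ M) (hα : 0 < α)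
    (hv : IsSteep P α v) (hPv : P v = ‖P‖) {s : ℝ}
    (hG : segment ℝ x (x + s • v) ⊆ G) :
    steepPotential G P α v (x + s • v) = steepPotential G P α v x + s * ‖P‖ := by
  have heq : ∀ (x : X) (s : ℝ), 0 ≤ s → segment ℝ x (x + s • v) ⊆ G →
      steepPotential G P α v (x + s • v) = steepPotential G P α v x + s * ‖P‖ := fun x s hs hG ↦
    ((hasSteepGrowth_steepPotential hM hα).add_smul_le x s hs).antisymm
      (steepPotential_add_mul_le (s := ⟨s, hs⟩) hM hα hv hPv hG)
  rcases le_total 0 s with hs | hs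
  · exact heq x s hs hG
  · have heq' := heq (x + s • v) (-s) (neg_nonneg.2 hs)
      (by rwa [neg_smul, add_neg_cancel_right, segment_symm])
    rw [neg_smul, add_neg_cancel_right] at heq'
    linarith

end SteepPotential

section SteepWidth

variable [MeasurableSpace X] [BorelSpace X]

lemma IsSteepSection.volume_preimage_le (hγ : IsSteepSection P α γ) (G : Set X) :
    volume (γ ⁻¹' G) ≤ ‖P‖ₑ * μH[1] (G ∩ range γ) := by
  have hle := (P.lipschitz.to_rightInverse hγ.rightInverse).hausdorffMeasure_preimage_le
    zero_le_one (G ∩ range γ)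
  rwa [preimage_inter_range, hausdorffMeasure_real, ENNReal.rpow_one] at hle

/-- The quantity `ξ(G, P, α)`, the largest `H¹` measure of the part of `G` on a Lipschitz curve all
of whose existing derivatives are steep. -/
noncomputable def steepWidth (G : Set X) (P : X →L[ℝ] ℝ) (α : ℝ) : ℝ≥0∞ :=
  ⨆ γ : {γ : ℝ → X // (∃ K : ℝ≥0, LipschitzWith K γ) ∧
    ∀ (t : ℝ) (w : X), HasDerivAt γ w t → IsSteep P α w}, μH[1] (G ∩ range (γ : ℝ → X))

lemma IsSteepSection.hausdorffMeasure_le_steepWidth (hγ : IsSteepSection P α γ) (hα : 0 < α) :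
    μH[1] (G ∩ range γ) ≤ steepWidth G P α :=
  le_iSup (fun γ : {γ : ℝ → X // (∃ K : ℝ≥0, LipschitzWith K γ) ∧
    ∀ (t : ℝ) (w : X), HasDerivAt γ w t → IsSteep P α w} ↦ μH[1] (G ∩ range (γ : ℝ → X)))
    ⟨γ, ⟨_, hγ.lipschitzWith hα⟩, fun _ _ ↦ hγ.isSteep_of_hasDerivAt⟩

lemma steepGain_le (hα : 0 < α) (x : X) :
    steepGain G P α x ≤ ‖P‖ₑ * steepWidth G P α := by
  refine iSup_le fun ⟨γ, hγ, _⟩ ↦ ?_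
  calc volume (γ ⁻¹' G ∩ Iic (P x)) ≤ volume (γ ⁻¹' G) := measure_mono inter_subset_left
    _ ≤ ‖P‖ₑ * μH[1] (G ∩ range γ) := hγ.volume_preimage_le G
    _ ≤ ‖P‖ₑ * steepWidth G P α := by gcongr; exact hγ.hausdorffMeasure_le_steepWidth hα

end SteepWidth

end Normed

/-- Existence of the "one-direction steep" auxiliary function `g` associated to a set `G`,
a norm-attaining functional `P` and a steepness parameter `α ∈ (0,1)`, assuming the
supremum `ξ(G,P,α)` of `H¹`-measures of `G` along `α`-steep Lipschitz curves is finite. -/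
theorem stmt18 {X : Type*} [NormedAddCommGroup X] [NormedSpace ℝ X]
    [MeasurableSpace X] [BorelSpace X]
    (G : Set X) (P : X →L[ℝ] ℝ) (hP : P ≠ 0)
    (v : X) (hv : ‖v‖ = 1) (hPv : P v = ‖P‖)
    (α : ℝ) (hα : α ∈ Set.Ioo (0 : ℝ) 1)
    (ξ : ℝ) (hξ0 : 0 ≤ ξ)
    (hξ : (⨆ γ : {γ : ℝ → X // (∃ K : NNReal, LipschitzWith K γ) ∧
            ∀ (t : ℝ) (w : X), HasDerivAt γ w t → α * ‖w‖ * ‖P‖ ≤ P w},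
          μH[1] (G ∩ Set.range (γ : ℝ → X))) = ENNReal.ofReal ξ) :
    ∃ g : X → ℝ,
      (∀ x : X, 0 ≤ g x ∧ g x ≤ ‖P‖ * ξ) ∧
      (∀ x y : X, P y = 0 → |g (x + y) - g x| ≤ α * ‖P‖ / (1 - α) * ‖y‖) ∧
      (∀ x w : X, ∃ l ∈ Set.Icc (0 : ℝ) 1,
        |g (x + w) - (g x + l * P w)| ≤ 2 * α * ‖P‖ / (1 - α) * ‖w‖ ∧
        (segment ℝ x (x + (P w / ‖P‖) • v) ⊆ G → l = 1)) ∧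
      LipschitzWith (Real.toNNReal ((1 + 2 * α / (1 - α)) * ‖P‖)) g := by
  have hwidth : steepWidth G P α = ENNReal.ofReal ξ := hξ
  have hM : ∀ x, steepGain G P α x ≤ (‖P‖₊ * ξ.toNNReal : ℝ≥0) := fun x ↦
    (steepGain_le hα.1 x).trans_eq (by rw [hwidth, ENNReal.coe_mul]; rfl)
  have hg : HasSteepGrowth P α v (steepPotential G P α v) :=
    hasSteepGrowth_steepPotential hM hα.1
  have hα' : α ∈ Ico 0 1 := Ioo_subset_Ico_self hα
  refine ⟨steepPotential G P α v,
    fun x ↦ ⟨steepPotential_nonneg hM x, (steepPotential_le hM x).trans_eq (by simp [hξ0])⟩,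
    fun x y ↦ hg.abs_sub_le_of_apply_eq_zero hα' hv hPv x, fun x w ↦ ?_,
    hg.lipschitzWith hα' hv hPv⟩
  obtain ⟨l, hl, hgl, hl1⟩ := hg.exists_abs_sub_le hα' hv hPv x w
  refine ⟨l, hl, hgl, fun hG ↦ hl1 ?_⟩
  rw [steepPotential_add_smul_eq hM hα.1 (isSteep_of_apply_eq_norm hα.2.le hv hPv) hPv hG,
    div_mul_cancel₀ _ (norm_ne_zero_iff.2 hP)]
end
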